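/- There exist constants H > 0, D > 0, α₀ > 0 and β₀ > 0, depending only on the instance μ (and the family b) and not on the allocation, such that for every allocation N = (N_1,…,N_K) ∈ ℝ_{>0}^K with g(μ, N) = 0: (1) h_a ≤ H and d_{a,a}^{-1} ≤ D for every a ∈ {2,…,K}; (2) there exists ã ∈ argmax_{a≠1} d(μ_1, x_{1,a})/d(μ_a, x_{1,a}) such that N_ã > α₀·N (where N = Σ_{a∈[K]} N_a) and h_ã ≥ β₀. -/

import Mathlib

open scoped BigOperators

/-- A single-parameter exponential family, given by the log-partition function `b`,
smooth with positive second derivative on an open interval `Θ`, together with the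
inverse `θof` of `b'` on the set of means `S = b'(Θ)`. -/
structure SPEF where
  Θ : Set ℝ
  Θ_isOpen : IsOpen Θ
  Θ_ordConnected : Set.OrdConnected Θ
  Θ_nonempty : Θ.Nonempty
  b : ℝ → ℝ
  b_smooth : ContDiffOn ℝ (⊤ : ℕ∞) b Θ
  b_conv : ∀ t ∈ Θ, 0 < iteratedDeriv 2 b t
  θof : ℝ → ℝ
  θof_mem : ∀ μ ∈ deriv b '' Θ, θof μ ∈ Θ
  θof_spec : ∀ μ ∈ deriv b '' Θ, deriv b (θof μ) = μ

namespace SPEF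

/-- The set of means of the family. -/
def S (F : SPEF) : Set ℝ := deriv F.b '' F.Θ

/-- KL divergence `d(μ, x)` between the members of the family with means `μ` and `x`. -/
noncomputable def d (F : SPEF) (μ x : ℝ) : ℝ :=
  (F.θof μ - F.θof x) * μ - F.b (F.θof μ) + F.b (F.θof x)

end SPEF

/-- A `K`-armed bandit instance with arm distributions in a fixed SPEF; arm `0`
(the paper's arm `1`) is the unique best arm. -/
structure Bandit (K : ℕ) [NeZero K] extends SPEF where
  two_le : 2 ≤ K
  μ : Fin K → ℝ
  μ_mem : ∀ a, μ a ∈ SPEF.S toSPEF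
  μ_best : ∀ a : Fin K, a ≠ 0 → μ a < μ 0

namespace Bandit

variable {K : ℕ} [NeZero K]

/-- KL divergence of the underlying family. -/
noncomputable def d (M : Bandit K) : ℝ → ℝ → ℝ := M.toSPEF.d

/-- The weighted mean `x_{1,a}(N₁, N_a)`. -/
noncomputable def x1 (M : Bandit K) (a : Fin K) (N1 Na : ℝ) : ℝ :=
  (N1 * M.μ 0 + Na * M.μ a) / (N1 + Na)

/-- The index `W_a(N₁, N_a)` of an arm `a ≠ 1`. -/
noncomputable def W (M : Bandit K) (a : Fin K) (N1 Na : ℝ) : ℝ :=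
  N1 * M.d (M.μ 0) (M.x1 a N1 Na) + Na * M.d (M.μ a) (M.x1 a N1 Na)

/-- The set `{2, …, K}` of suboptimal arms. -/
def alt (K : ℕ) [NeZero K] : Finset (Fin K) := Finset.univ.filter (fun a => a ≠ 0)

/-- The anchor function `g(μ, N)`. -/
noncomputable def g (M : Bandit K) (Nv : Fin K → ℝ) : ℝ :=
  (∑ a ∈ alt K, M.d (M.μ 0) (M.x1 a (Nv 0) (Nv a)) / M.d (M.μ a) (M.x1 a (Nv 0) (Nv a))) - 1

end Bandit

open Bandit

namespace Bandit

variable {K : ℕ} [NeZero K]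

/-- Partial derivative of the KL divergence `d` in its second argument. -/
noncomputable def d2 (M : Bandit K) (μv x : ℝ) : ℝ := deriv (fun y => M.d μv y) x

/-- The quantity `f(μ, a, N)`, the negative of the derivative of `g` w.r.t. `x_{1,a}`. -/
noncomputable def fq (M : Bandit K) (a : Fin K) (Nv : Fin K → ℝ) : ℝ :=
  (M.d (M.μ 0) (M.x1 a (Nv 0) (Nv a)) / M.d (M.μ a) (M.x1 a (Nv 0) (Nv a))) *
    (M.d2 (M.μ a) (M.x1 a (Nv 0) (Nv a)) / M.d (M.μ a) (M.x1 a (Nv 0) (Nv a)) -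
      M.d2 (M.μ 0) (M.x1 a (Nv 0) (Nv a)) / M.d (M.μ 0) (M.x1 a (Nv 0) (Nv a)))

/-- The quantity `h_a(μ, N₁, N_a) = f(μ, a, N)·N₁²·Δ_a/(N₁+N_a)²`. -/
noncomputable def hq (M : Bandit K) (a : Fin K) (Nv : Fin K → ℝ) : ℝ :=
  M.fq a Nv * ((Nv 0) ^ 2 * (M.μ 0 - M.μ a) / (Nv 0 + Nv a) ^ 2)

/-- The quantity `h(B) = Σ_{a∈B} h_a·d_{a,a}⁻¹`. -/
noncomputable def hB (M : Bandit K) (B : Finset (Fin K)) (Nv : Fin K → ℝ) : ℝ :=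
  ∑ a ∈ B, M.hq a Nv / M.d (M.μ a) (M.x1 a (Nv 0) (Nv a))

/-- The quantity `h(N) = Σ_{a∈B̄ᶜ} h_a·N_a`. -/
noncomputable def hN (M : Bandit K) (B : Finset (Fin K)) (Nv : Fin K → ℝ) : ℝ :=
  ∑ a ∈ alt K \ B, M.hq a Nv * Nv a

/-- The quantity `d_B = (Σ_{a∈B} d_{a,a}⁻¹)⁻¹`. -/
noncomputable def dB (M : Bandit K) (B : Finset (Fin K)) (Nv : Fin K → ℝ) : ℝ :=
  (∑ a ∈ B, (M.d (M.μ a) (M.x1 a (Nv 0) (Nv a)))⁻¹)⁻¹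

end Bandit

namespace SPEF

variable (F : SPEF)

lemma contDiffOn_deriv_b : ContDiffOn ℝ 1 (deriv F.b) F.Θ :=
  F.b_smooth.deriv_of_isOpen F.Θ_isOpen (by norm_cast)

lemma deriv_deriv_b_pos {t : ℝ} (ht : t ∈ F.Θ) : 0 < deriv (deriv F.b) t := by
  simpa [iteratedDeriv_succ] using F.b_conv t ht

lemma hasStrictDerivAt_deriv_b {t : ℝ} (ht : t ∈ F.Θ) :
    HasStrictDerivAt (deriv F.b) (deriv (deriv F.b) t) t :=
  (F.contDiffOn_deriv_b.contDiffAt (F.Θ_isOpen.mem_nhds ht)).hasStrictDerivAt one_ne_zero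

lemma hasDerivAt_b {t : ℝ} (ht : t ∈ F.Θ) : HasDerivAt F.b (deriv F.b t) t :=
  ((F.b_smooth.contDiffAt (F.Θ_isOpen.mem_nhds ht)).differentiableAt (by simp)).hasDerivAt

lemma strictMonoOn_deriv_b : StrictMonoOn (deriv F.b) F.Θ :=
  strictMonoOn_of_deriv_pos F.Θ_ordConnected.convex F.contDiffOn_deriv_b.continuousOn
    fun _ ht => F.deriv_deriv_b_pos (interior_subset ht)

lemma θof_deriv_b {t : ℝ} (ht : t ∈ F.Θ) : F.θof (deriv F.b t) = t :=
  F.strictMonoOn_deriv_b.injOn (F.θof_mem _ ⟨t, ht, rfl⟩) ht (F.θof_spec _ ⟨t, ht, rfl⟩)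

lemma S_isOpen : IsOpen F.S := by
  rw [isOpen_iff_mem_nhds]
  rintro _ ⟨t, ht, rfl⟩
  rw [← (F.hasStrictDerivAt_deriv_b ht).map_nhds_eq (F.deriv_deriv_b_pos ht).ne']
  exact Filter.image_mem_map (F.Θ_isOpen.mem_nhds ht)

lemma S_ordConnected : F.S.OrdConnected :=
  (F.Θ_ordConnected.isPreconnected.image _ F.contDiffOn_deriv_b.continuousOn).ordConnected

lemma strictMonoOn_θof : StrictMonoOn F.θof F.S := by
  rintro _ ⟨s, hs, rfl⟩ _ ⟨t, ht, rfl⟩ hst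
  rw [F.θof_deriv_b hs, F.θof_deriv_b ht]
  exact (F.strictMonoOn_deriv_b.lt_iff_lt hs ht).1 hst

lemma image_θof : F.θof '' F.S = F.Θ := by
  ext t
  constructor
  · rintro ⟨x, hx, rfl⟩
    exact F.θof_mem x hx
  · exact fun ht => ⟨_, ⟨t, ht, rfl⟩, F.θof_deriv_b ht⟩

lemma continuousAt_θof {x : ℝ} (hx : x ∈ F.S) : ContinuousAt F.θof x := by
  refine F.strictMonoOn_θof.continuousAt_of_image_mem_nhds (F.S_isOpen.mem_nhds hx) ?_
  rw [F.image_θof]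
  exact F.Θ_isOpen.mem_nhds (F.θof_mem x hx)

/-- The derivative of `θof`, i.e. the inverse variance as a function of the mean. -/
noncomputable def invVar (x : ℝ) : ℝ := (deriv (deriv F.b) (F.θof x))⁻¹

lemma invVar_pos {x : ℝ} (hx : x ∈ F.S) : 0 < F.invVar x :=
  inv_pos.2 (F.deriv_deriv_b_pos (F.θof_mem x hx))

lemma continuousOn_invVar : ContinuousOn F.invVar F.S := by
  intro x hx
  have hΘ := F.θof_mem x hx
  have h : ContinuousOn (deriv (deriv F.b)) F.Θ :=
    F.contDiffOn_deriv_b.continuousOn_deriv_of_isOpen F.Θ_isOpen le_rfl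
  exact (((h.continuousAt (F.Θ_isOpen.mem_nhds hΘ)).comp (F.continuousAt_θof hx)).inv₀
    (F.deriv_deriv_b_pos hΘ).ne').continuousWithinAt

lemma hasDerivAt_θof {x : ℝ} (hx : x ∈ F.S) : HasDerivAt F.θof (F.invVar x) x := by
  have hΘ := F.θof_mem x hx
  refine (F.hasStrictDerivAt_deriv_b hΘ).hasDerivAt.of_local_left_inverse (F.continuousAt_θof hx)
    (F.deriv_deriv_b_pos hΘ).ne' ?_
  filter_upwards [F.S_isOpen.mem_nhds hx] with y hy using F.θof_spec y hy

lemma hasDerivAt_d (μ : ℝ) {x : ℝ} (hx : x ∈ F.S) :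
    HasDerivAt (fun y => F.d μ y) (F.invVar x * (x - μ)) x := by
  have hb := (F.hasDerivAt_b (F.θof_mem x hx)).comp x (F.hasDerivAt_θof hx)
  rw [F.θof_spec x hx] at hb
  have h := ((((F.hasDerivAt_θof hx).const_sub (F.θof μ)).mul_const μ).sub_const
    (F.b (F.θof μ))).add hb
  exact h.congr_deriv (by ring)

lemma d_self (μ : ℝ) : F.d μ μ = 0 := by simp [d]

/-- The divergence is half the squared distance times the inverse variance at an
intermediate mean. -/
lemma exists_d_eq {p q μ x : ℝ} (hpq : Set.Icc p q ⊆ F.S) (hμ : μ ∈ Set.Icc p q)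
    (hx : x ∈ Set.Icc p q) : ∃ ξ ∈ Set.Icc p q, F.d μ x = F.invVar ξ / 2 * (x - μ) ^ 2 := by
  have hq (z : ℝ) : HasDerivAt (fun y => (y - μ) ^ 2) (2 * (z - μ)) z := by
    simpa using ((hasDerivAt_id z).sub_const μ).fun_pow 2
  rcases lt_trichotomy μ x with h | rfl | h
  · have hsub : Set.Icc μ x ⊆ Set.Icc p q := Set.Icc_subset_Icc hμ.1 hx.2
    obtain ⟨ξ, hξ, e⟩ := exists_ratio_hasDerivAt_eq_ratio_slope _ _ h
      (fun y hy => (F.hasDerivAt_d μ (hpq (hsub hy))).continuousAt.continuousWithinAt)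
      (fun y hy => F.hasDerivAt_d μ (hpq (hsub (Set.Ioo_subset_Icc_self hy)))) _ _
      (fun y _ => (hq y).continuousAt.continuousWithinAt) (fun y _ => hq y)
    refine ⟨ξ, hsub (Set.Ioo_subset_Icc_self hξ), ?_⟩
    simp only [F.d_self] at e
    refine mul_right_cancel₀ (sub_pos.2 hξ.1).ne' ?_
    linarith
  · exact ⟨μ, hμ, by simp [F.d_self]⟩
  · have hsub : Set.Icc x μ ⊆ Set.Icc p q := Set.Icc_subset_Icc hx.1 hμ.2
    obtain ⟨ξ, hξ, e⟩ := exists_ratio_hasDerivAt_eq_ratio_slope _ _ h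
      (fun y hy => (F.hasDerivAt_d μ (hpq (hsub hy))).continuousAt.continuousWithinAt)
      (fun y hy => F.hasDerivAt_d μ (hpq (hsub (Set.Ioo_subset_Icc_self hy)))) _ _
      (fun y _ => (hq y).continuousAt.continuousWithinAt) (fun y _ => hq y)
    refine ⟨ξ, hsub (Set.Ioo_subset_Icc_self hξ), ?_⟩
    simp only [F.d_self] at e
    refine mul_right_cancel₀ (sub_neg.2 hξ.2).ne ?_
    linarith

lemma exists_invVar_bounds {p q : ℝ} (hp : p ∈ F.S) (hq : q ∈ F.S) (hpq : p ≤ q) :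
    ∃ m C : ℝ, 0 < m ∧ m ≤ C ∧ ∀ x ∈ Set.Icc p q, m ≤ F.invVar x ∧ F.invVar x ≤ C := by
  have hsub : Set.Icc p q ⊆ F.S := F.S_ordConnected.out hp hq
  have hc := F.continuousOn_invVar.mono hsub
  obtain ⟨y, hy, hmin⟩ := isCompact_Icc.exists_isMinOn (Set.nonempty_Icc.2 hpq) hc
  obtain ⟨z, hz, hmax⟩ := isCompact_Icc.exists_isMaxOn (Set.nonempty_Icc.2 hpq) hc
  exact ⟨_, _, F.invVar_pos (hsub hy), hmin hz, fun x hx => ⟨hmin hx, hmax hx⟩⟩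

end SPEF

/-- Two-sided bounds relating the data of one suboptimal arm: `u = μ₁ - x`, `v = x - μ_a`,
`e₁ = d(μ₁, x)`, `e = d(μ_a, x)`, and `t` the inverse variance at `x`. -/
structure ArmBounds (m C u v e₁ e t : ℝ) : Prop where
  u_pos : 0 < u
  v_pos : 0 < v
  e₁_ge : m / 2 * u ^ 2 ≤ e₁
  e₁_le : e₁ ≤ C / 2 * u ^ 2
  e_ge : m / 2 * v ^ 2 ≤ e
  e_le : e ≤ C / 2 * v ^ 2
  t_ge : m ≤ t
  t_le : t ≤ C

namespace ArmBounds

lemma mul_le_mul_of_mul_sq_le {m C k u v : ℝ} (hm : 0 < m) (hmC : m ≤ C) (hk : 1 ≤ k)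
    (hv : 0 < v) (h : m * u ^ 2 ≤ k * C * v ^ 2) : m * u ≤ k * C * v := by
  have hC : 0 < C := hm.trans_le hmC
  have hkC : m ≤ k * C := by nlinarith
  refine le_of_sq_le_sq ?_ (by positivity)
  calc (m * u) ^ 2 = m * (m * u ^ 2) := by ring
    _ ≤ m * (k * C * v ^ 2) := by gcongr
    _ ≤ k * C * (k * C * v ^ 2) := by gcongr
    _ = (k * C * v) ^ 2 := by ring

variable {m C u v e₁ e t : ℝ}

lemma e₁_pos (h : ArmBounds m C u v e₁ e t) (hm : 0 < m) : 0 < e₁ :=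
  lt_of_lt_of_le (by have := h.u_pos; positivity) h.e₁_ge

lemma e_pos (h : ArmBounds m C u v e₁ e t) (hm : 0 < m) : 0 < e :=
  lt_of_lt_of_le (by have := h.v_pos; positivity) h.e_ge

lemma mul_u_le (h : ArmBounds m C u v e₁ e t) (hm : 0 < m) (hmC : m ≤ C)
    (hr : e₁ / e ≤ 1) : m * u ≤ C * v := by
  rw [div_le_one (h.e_pos hm)] at hr
  have := mul_le_mul_of_mul_sq_le (u := u) (k := 1) hm hmC le_rfl h.v_pos
    (by linarith [h.e₁_ge, h.e_le])
  linarith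

lemma mul_v_le (h : ArmBounds m C u v e₁ e t) (hm : 0 < m) (hmC : m ≤ C) {k : ℝ}
    (hk : 1 ≤ k) (hr : 1 ≤ k * (e₁ / e)) : m * v ≤ k * C * u := by
  rw [← mul_div_assoc, one_le_div (h.e_pos hm)] at hr
  refine mul_le_mul_of_mul_sq_le hm hmC hk h.u_pos ?_
  have := mul_le_mul_of_nonneg_left h.e₁_le (zero_le_one.trans hk)
  linarith [h.e_ge]

lemma inv_e_le (h : ArmBounds m C u v e₁ e t) (hm : 0 < m) (hmC : m ≤ C) {δ : ℝ} (hδ : 0 < δ)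
    (hδu : δ ≤ u + v) (hr : e₁ / e ≤ 1) : e⁻¹ ≤ 2 * (m + C) ^ 2 / (m ^ 3 * δ ^ 2) := by
  have hC : 0 < C := hm.trans_le hmC
  have hv : m * δ ≤ (m + C) * v := by
    nlinarith [h.mul_u_le hm hmC hr]
  have hv2 : (m * δ) ^ 2 ≤ ((m + C) * v) ^ 2 := by gcongr
  rw [inv_le_comm₀ (h.e_pos hm) (by positivity), inv_div, div_le_iff₀ (by positivity)]
  calc m ^ 3 * δ ^ 2 = m * (m * δ) ^ 2 := by ring
    _ ≤ m * ((m + C) * v) ^ 2 := by gcongr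
    _ = m / 2 * v ^ 2 * (2 * (m + C) ^ 2) := by ring
    _ ≤ e * (2 * (m + C) ^ 2) := by gcongr; exact h.e_ge

/-- Cancelling `e₁` in the expression for `h_a`. -/
lemma h_eq (h : ArmBounds m C u v e₁ e t) (hm : 0 < m) :
    e₁ / e * (t * v / e - t * (-u) / e₁) * (v ^ 2 / (u + v)) =
      (e₁ / e * (t * v * e⁻¹) + t * u * e⁻¹) * (v ^ 2 / (u + v)) := by
  have := (h.e₁_pos hm).ne'
  have := (h.e_pos hm).ne'
  field_simp
  ring

lemma h_le (h : ArmBounds m C u v e₁ e t) (hm : 0 < m) {R D : ℝ}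
    (huR : u + v ≤ R) (hr : e₁ / e ≤ 1) (hD : e⁻¹ ≤ D) :
    e₁ / e * (t * v / e - t * (-u) / e₁) * (v ^ 2 / (u + v)) ≤ C * R * D * R := by
  have hu := h.u_pos
  have hv := h.v_pos
  have he := h.e_pos hm
  have ht : 0 < t := hm.trans_le h.t_ge
  have hC : 0 < C := ht.trans_le h.t_le
  rw [h.h_eq hm]
  have hvR : v ^ 2 / (u + v) ≤ R := by
    rw [div_le_iff₀ (by positivity)]
    nlinarith
  have hf : e₁ / e * (t * v * e⁻¹) + t * u * e⁻¹ ≤ C * R * D := by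
    calc e₁ / e * (t * v * e⁻¹) + t * u * e⁻¹ ≤ 1 * (t * v * e⁻¹) + t * u * e⁻¹ := by gcongr
      _ = t * (u + v) * e⁻¹ := by ring
      _ ≤ C * R * D := by
        gcongr
        · exact mul_nonneg hC.le (by linarith)
        · exact h.t_le
  have hD0 : 0 < D := (inv_pos.2 he).trans_le hD
  have hR0 : 0 < R := by linarith
  exact mul_le_mul hf hvR (by positivity) (by positivity)

lemma le_h (h : ArmBounds m C u v e₁ e t) (hm : 0 < m) (hmC : m ≤ C) {k : ℝ} (hk : 1 ≤ k)
    (hr : 1 ≤ k * (e₁ / e)) :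
    2 * m ^ 2 / (C * (m + k * C)) ≤
      e₁ / e * (t * v / e - t * (-u) / e₁) * (v ^ 2 / (u + v)) := by
  have hu := h.u_pos
  have hv := h.v_pos
  have he := h.e_pos hm
  have he₁ := h.e₁_pos hm
  have ht : 0 < t := hm.trans_le h.t_ge
  have hC : 0 < C := hm.trans_le hmC
  have huv := h.mul_v_le hm hmC hk hr
  rw [h.h_eq hm]
  calc 2 * m ^ 2 / (C * (m + k * C)) ≤ 2 * m * u / (C * (u + v)) := by
        rw [div_le_div_iff₀ (by positivity) (by positivity)]
        have : m * (u + v) ≤ (m + k * C) * u := by linarith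
        have := mul_le_mul_of_nonneg_left this (by positivity : 0 ≤ 2 * m * C)
        linarith
    _ = m * u * (C / 2 * v ^ 2)⁻¹ * (v ^ 2 / (u + v)) := by field_simp
    _ ≤ t * u * e⁻¹ * (v ^ 2 / (u + v)) := by
        gcongr
        · exact h.t_ge
        · exact h.e_le
    _ ≤ _ := by
        gcongr
        exact le_add_of_nonneg_left (by positivity)

end ArmBounds

namespace Bandit

variable {K : ℕ} [NeZero K] {M : Bandit K}

lemma mem_alt {a : Fin K} : a ∈ alt K ↔ a ≠ 0 := by simp [alt]

lemma alt_nonempty (M : Bandit K) : (alt K).Nonempty :=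
  ⟨⟨1, M.two_le⟩, mem_alt.2 fun h => by simpa using congrArg Fin.val h⟩

lemma sub_x1 (a : Fin K) {N₁ Na : ℝ} (h₁ : 0 < N₁) (ha : 0 < Na) :
    M.μ 0 - M.x1 a N₁ Na = Na * (M.μ 0 - M.μ a) / (N₁ + Na) := by
  unfold x1
  field_simp
  ring

lemma x1_sub (a : Fin K) {N₁ Na : ℝ} (h₁ : 0 < N₁) (ha : 0 < Na) :
    M.x1 a N₁ Na - M.μ a = N₁ * (M.μ 0 - M.μ a) / (N₁ + Na) := by
  unfold x1
  field_simp
  ring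

lemma x1_mem_Ioo {a : Fin K} (ha : a ∈ alt K) {N₁ Na : ℝ} (h₁ : 0 < N₁) (hNa : 0 < Na) :
    M.x1 a N₁ Na ∈ Set.Ioo (M.μ a) (M.μ 0) := by
  have hΔ : 0 < M.μ 0 - M.μ a := sub_pos.2 (M.μ_best a (mem_alt.1 ha))
  constructor
  · rw [← sub_pos, x1_sub a h₁ hNa]
    positivity
  · rw [← sub_pos, sub_x1 a h₁ hNa]
    positivity

lemma armBounds {m C p : ℝ} (hp : p ∈ M.S) (hpμ : ∀ a, p ≤ M.μ a)
    (hmC : ∀ x ∈ Set.Icc p (M.μ 0), m ≤ M.invVar x ∧ M.invVar x ≤ C)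
    {a : Fin K} (ha : a ∈ alt K) {N₁ Na : ℝ} (h₁ : 0 < N₁) (hNa : 0 < Na) :
    ArmBounds m C (M.μ 0 - M.x1 a N₁ Na) (M.x1 a N₁ Na - M.μ a)
      (M.d (M.μ 0) (M.x1 a N₁ Na)) (M.d (M.μ a) (M.x1 a N₁ Na)) (M.invVar (M.x1 a N₁ Na)) := by
  have hsub : Set.Icc p (M.μ 0) ⊆ M.S := M.S_ordConnected.out hp (M.μ_mem 0)
  obtain ⟨hxa, hx0⟩ := M.x1_mem_Ioo ha h₁ hNa
  have hx : M.x1 a N₁ Na ∈ Set.Icc p (M.μ 0) := ⟨(hpμ a).trans hxa.le, hx0.le⟩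
  obtain ⟨ξ, hξ, e⟩ := M.exists_d_eq hsub ⟨hpμ 0, le_rfl⟩ hx
  obtain ⟨ζ, hζ, e'⟩ := M.exists_d_eq hsub ⟨hpμ a, (hxa.trans hx0).le⟩ hx
  rw [sub_sq_comm] at e
  have hξ' := hmC ξ hξ
  have hζ' := hmC ζ hζ
  have hx' := hmC _ hx
  refine ⟨sub_pos.2 hx0, sub_pos.2 hxa, ?_, ?_, ?_, ?_, hx'.1, hx'.2⟩ <;> unfold d
  · rw [e]; gcongr; exact hξ'.1
  · rw [e]; gcongr; exact hξ'.2
  · rw [e']; gcongr; exact hζ'.1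
  · rw [e']; gcongr; exact hζ'.2

lemma hq_eq {a : Fin K} (ha : a ∈ alt K) {Nv : Fin K → ℝ} (hN : ∀ a, 0 < Nv a)
    {x : ℝ} (hx : M.x1 a (Nv 0) (Nv a) = x) :
    M.hq a Nv = M.d (M.μ 0) x / M.d (M.μ a) x *
      (M.invVar x * (x - M.μ a) / M.d (M.μ a) x -
        M.invVar x * (-(M.μ 0 - x)) / M.d (M.μ 0) x) *
      ((x - M.μ a) ^ 2 / ((M.μ 0 - x) + (x - M.μ a))) := by
  obtain ⟨hxa, hx0⟩ := M.x1_mem_Ioo ha (hN 0) (hN a)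
  have hxS : x ∈ M.S :=
    M.S_ordConnected.out (M.μ_mem a) (M.μ_mem 0) (hx ▸ ⟨hxa.le, hx0.le⟩)
  have hd2 (μ : ℝ) : M.d2 μ x = M.invVar x * (x - μ) := (M.hasDerivAt_d μ hxS).deriv
  have hw : (Nv 0) ^ 2 * (M.μ 0 - M.μ a) / (Nv 0 + Nv a) ^ 2 =
      (x - M.μ a) ^ 2 / ((M.μ 0 - x) + (x - M.μ a)) := by
    have hΔ : 0 < M.μ 0 - M.μ a := sub_pos.2 (hxa.trans hx0)
    have h0 := hN 0
    have h1 := hN a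
    rw [sub_add_sub_cancel, ← hx, x1_sub a h0 h1]
    field_simp
  rw [hq, fq, hx, hd2, hd2, hw, neg_sub]

end Bandit

/-- Lemma on uniform bounds when `g = 0`: uniform upper bounds on
`h_a` and `d_{a,a}⁻¹`, and a maximal-ratio arm with linearly many samples and `h_ã`
bounded below, with constants depending only on the instance. -/
theorem statement_8 {K : ℕ} [NeZero K] (M : Bandit K) :
    ∃ H D α₀ β₀ : ℝ, 0 < H ∧ 0 < D ∧ 0 < α₀ ∧ 0 < β₀ ∧
      ∀ Nv : Fin K → ℝ, (∀ a, 0 < Nv a) → M.g Nv = 0 →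
        (∀ a ∈ alt K,
          M.hq a Nv ≤ H ∧ (M.d (M.μ a) (M.x1 a (Nv 0) (Nv a)))⁻¹ ≤ D) ∧
        ∃ atil ∈ alt K,
          (∀ a ∈ alt K,
            M.d (M.μ 0) (M.x1 a (Nv 0) (Nv a)) / M.d (M.μ a) (M.x1 a (Nv 0) (Nv a)) ≤
              M.d (M.μ 0) (M.x1 atil (Nv 0) (Nv atil)) /
                M.d (M.μ atil) (M.x1 atil (Nv 0) (Nv atil))) ∧
          α₀ * (∑ a, Nv a) < Nv atil ∧
          β₀ ≤ M.hq atil Nv := by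
  have hne : (Finset.univ : Finset (Fin K)).Nonempty := ⟨0, Finset.mem_univ 0⟩
  obtain ⟨i, -, hi⟩ := Finset.exists_min_image Finset.univ M.μ hne
  obtain ⟨j, hj, hjmax⟩ := Finset.exists_max_image (alt K) M.μ M.alt_nonempty
  replace hi : ∀ a, M.μ i ≤ M.μ a := fun a => hi a (Finset.mem_univ a)
  have hδ : 0 < M.μ 0 - M.μ j := sub_pos.2 (M.μ_best j (mem_alt.1 hj))
  obtain ⟨m, C, hm, hmC, hmCx⟩ := M.exists_invVar_bounds (M.μ_mem i) (M.μ_mem 0) (hi 0)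
  have hC : 0 < C := hm.trans_le hmC
  have hR : 0 < M.μ 0 - M.μ i := hδ.trans_le (by linarith [hi j])
  have hK : (1 : ℝ) ≤ K := by exact_mod_cast NeZero.one_le
  have hK0 : (0 : ℝ) < K := by linarith
  set D := 2 * (m + C) ^ 2 / (m ^ 3 * (M.μ 0 - M.μ j) ^ 2)
  have hD0 : 0 < D := by positivity
  refine ⟨C * (M.μ 0 - M.μ i) * D * (M.μ 0 - M.μ i), D, m ^ 2 / (2 * (K * C) ^ 2),
    2 * m ^ 2 / (C * (m + K * C)), by positivity, hD0, by positivity, by positivity, ?_⟩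
  intro Nv hN hg
  have hb (a : Fin K) (ha : a ∈ alt K) := M.armBounds (M.μ_mem i) hi hmCx ha (hN 0) (hN a)
  set r : Fin K → ℝ := fun a =>
    M.d (M.μ 0) (M.x1 a (Nv 0) (Nv a)) / M.d (M.μ a) (M.x1 a (Nv 0) (Nv a))
  have hsum : ∑ a ∈ alt K, r a = 1 := sub_eq_zero.1 hg
  have hr0 (a : Fin K) (ha : a ∈ alt K) : 0 ≤ r a :=
    div_nonneg ((hb a ha).e₁_pos hm).le ((hb a ha).e_pos hm).le
  have hr1 (a : Fin K) (ha : a ∈ alt K) : r a ≤ 1 :=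
    hsum ▸ Finset.single_le_sum hr0 ha
  have hbalance (a : Fin K) : Nv 0 * (M.μ 0 - M.x1 a (Nv 0) (Nv a)) =
      Nv a * (M.x1 a (Nv 0) (Nv a) - M.μ a) := by
    rw [sub_x1 a (hN 0) (hN a), x1_sub a (hN 0) (hN a)]
    ring
  refine ⟨fun a ha => ?_, ?_⟩
  · have hinv := (hb a ha).inv_e_le hm hmC hδ (by linarith [hjmax a ha]) (hr1 a ha)
    refine ⟨?_, hinv⟩
    rw [hq_eq ha hN rfl]
    exact (hb a ha).h_le hm (by linarith [hi a]) (hr1 a ha) hinv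
  · obtain ⟨k, hk, hkmax⟩ := Finset.exists_max_image (alt K) r M.alt_nonempty
    have hrk : 1 ≤ K * r k := by
      calc (1 : ℝ) = ∑ a ∈ alt K, r a := hsum.symm
        _ ≤ (alt K).card * r k := by simpa using Finset.sum_le_card_nsmul _ _ _ hkmax
        _ ≤ K * r k := by
          gcongr
          · exact hr0 k hk
          · simpa using Finset.card_le_univ (alt K)
    refine ⟨k, hk, hkmax, ?_, ?_⟩
    · have hle (a : Fin K) : m * Nv a ≤ C * Nv 0 := by
        by_cases ha : a = 0
        · subst ha
          exact mul_le_mul_of_nonneg_right hmC (hN 0).le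
        · have hba := hb a (mem_alt.2 ha)
          refine le_of_mul_le_mul_right ?_ hba.v_pos
          have := mul_le_mul_of_nonneg_left
            (hba.mul_u_le hm hmC (hr1 a (mem_alt.2 ha))) (hN 0).le
          linear_combination this - m * hbalance a
      have htot : m * ∑ a, Nv a ≤ K * C * Nv 0 := by
        rw [Finset.mul_sum]
        have := Finset.sum_le_card_nsmul Finset.univ _ _ fun a _ => hle a
        simpa [mul_assoc] using this
      have hbest : m * Nv 0 ≤ K * C * Nv k := by
        refine le_of_mul_le_mul_right ?_ (hb k hk).u_pos
        have := mul_le_mul_of_nonneg_left ((hb k hk).mul_v_le hm hmC hK hrk) (hN k).le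
        linear_combination this + m * hbalance k
      have hNk := hN k
      rw [div_mul_eq_mul_div, div_lt_iff₀ (by positivity)]
      calc m ^ 2 * ∑ a, Nv a = m * (m * ∑ a, Nv a) := by ring
        _ ≤ m * (K * C * Nv 0) := by gcongr
        _ = K * C * (m * Nv 0) := by ring
        _ ≤ K * C * (K * C * Nv k) := by gcongr
        _ < Nv k * (2 * (K * C) ^ 2) := by
          have : 0 < Nv k * (K * C) ^ 2 := by positivity
          linarith
    · rw [hq_eq hk hN rfl]
      exact (hb k hk).le_h hm hmC hK hrk
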